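/- arXiv:1306.4483 — 2 statements merged into one kernel-verified Lean document; each statement's English description precedes it below -/
import Mathlib

section
/- For the explicit symmetric 9×9 integer matrices A₁, A₂, A₃, A₄ given in the paper, the determinant of x₁A₁ + x₂A₂ + x₃A₃ + x₄A₄ equals 8·q·h₄, where h₄ is the specialized Vámos polynomial and q is the explicit degree-5 polynomial listed in the paper. -/
/-!
Both sides are homogeneous of degree 9, so it suffices to prove the identity at `x₁ = 1`, where it
is an identity of polynomials in `y, z, w` with integer coefficients. That identity is a finite
computation, arranged so that the kernel can carry it out.

The determinant is computed by Laplace expansion along rows, from the last row to the first,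
tabulating for each `k` the minors of the last `k` rows on all `k`-element sets of columns. This
takes `2 ^ 9` minors altogether instead of `9!` products. Polynomials are kept in nested Horner
form as lists of lists of lists of integers, so that multiplying by a linear form amounts to shifts,
scalings and additions, and the entries of each table are evaluated before the next one is built.
The single evaluation is `pencil_check`.

The meaning of the computation is established over an arbitrary commutative ring: the operations
on lists evaluate correctly (`Coeff.eval_mulLin`), and the table holds determinants of submatrices
(`eval_minors`, by induction on the rows from `Matrix.det_succ_row_zero`). Specialising to `ℝ`
gives `det_pencil`. Homogeneity (`Matrix.det_smul`, `eval_qpoly_scale`, `eval_h4_scale`) extends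
it to all points with `x₁ ≠ 0`, and these suffice after multiplying both sides by `x₁`.
-/

open MvPolynomial Polynomial Matrix

noncomputable def univPoly {n : ℕ} (h : MvPolynomial (Fin n) ℝ) (e v : Fin n → ℝ) : Polynomial ℝ :=
  MvPolynomial.aeval (fun i => Polynomial.C (v i) + Polynomial.C (e i) * Polynomial.X) h

def RealRooted (p : Polynomial ℝ) : Prop :=
  ∀ z : ℂ, (p.map (algebraMap ℝ ℂ)).IsRoot z → z.im = 0

def Hyperbolic {n : ℕ} (h : MvPolynomial (Fin n) ℝ) (e : Fin n → ℝ) : Prop :=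
  MvPolynomial.eval e h ≠ 0 ∧ ∀ v : Fin n → ℝ, RealRooted (univPoly h e v)

def hypCone {n : ℕ} (h : MvPolynomial (Fin n) ℝ) (e : Fin n → ℝ) : Set (Fin n → ℝ) :=
  {v | ∀ t : ℝ, (univPoly h e v).IsRoot t → t ≤ 0}

noncomputable def h4 : MvPolynomial (Fin 4) ℝ :=
  X 0 ^ 2 * X 1 ^ 2 + 4 * (X 0 + X 1 + X 2 + X 3) *
    (X 0 * X 1 * X 2 + X 0 * X 1 * X 3 + X 0 * X 2 * X 3 + X 1 * X 2 * X 3)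

noncomputable def e4 : Fin 4 → ℝ := ![1, 1, 0, 0]

set_option maxHeartbeats 1000000 in
noncomputable def qpoly : MvPolynomial (Fin 4) ℝ :=
  (MvPolynomial.C 13684 * MvPolynomial.X 0 ^ 4 * MvPolynomial.X 1) +
    (MvPolynomial.C 44736 * MvPolynomial.X 0 ^ 3 * MvPolynomial.X 1 ^ 2) +
    (MvPolynomial.C 43092 * MvPolynomial.X 0 ^ 2 * MvPolynomial.X 1 ^ 3) +
    (MvPolynomial.C 12672 * MvPolynomial.X 0 * MvPolynomial.X 1 ^ 4) +
    (MvPolynomial.C 20526 * MvPolynomial.X 0 ^ 4 * MvPolynomial.X 2) +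
    (MvPolynomial.C 137404 * MvPolynomial.X 0 ^ 3 * MvPolynomial.X 1 * MvPolynomial.X 2) +
    (MvPolynomial.C 234086 * MvPolynomial.X 0 ^ 2 * MvPolynomial.X 1 ^ 2 * MvPolynomial.X 2) +
    (MvPolynomial.C 130140 * MvPolynomial.X 0 * MvPolynomial.X 1 ^ 3 * MvPolynomial.X 2) +
    (MvPolynomial.C 19008 * MvPolynomial.X 1 ^ 4 * MvPolynomial.X 2) +
    (MvPolynomial.C 81141 * MvPolynomial.X 0 ^ 3 * MvPolynomial.X 2 ^ 2) +
    (MvPolynomial.C 298281 * MvPolynomial.X 0 ^ 2 * MvPolynomial.X 1 * MvPolynomial.X 2 ^ 2) +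
    (MvPolynomial.C 294753 * MvPolynomial.X 0 * MvPolynomial.X 1 ^ 2 * MvPolynomial.X 2 ^ 2) +
    (MvPolynomial.C 78381 * MvPolynomial.X 1 ^ 3 * MvPolynomial.X 2 ^ 2) +
    (MvPolynomial.C 95004 * MvPolynomial.X 0 ^ 2 * MvPolynomial.X 2 ^ 3) +
    (MvPolynomial.C 202680 * MvPolynomial.X 0 * MvPolynomial.X 1 * MvPolynomial.X 2 ^ 3) +
    (MvPolynomial.C 97308 * MvPolynomial.X 1 ^ 2 * MvPolynomial.X 2 ^ 3) +
    (MvPolynomial.C 34560 * MvPolynomial.X 0 * MvPolynomial.X 2 ^ 4) +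
    (MvPolynomial.C 34560 * MvPolynomial.X 1 * MvPolynomial.X 2 ^ 4) +
    (MvPolynomial.C 20526 * MvPolynomial.X 0 ^ 4 * MvPolynomial.X 3) +
    (MvPolynomial.C 143132 * MvPolynomial.X 0 ^ 3 * MvPolynomial.X 1 * MvPolynomial.X 3) +
    (MvPolynomial.C 245302 * MvPolynomial.X 0 ^ 2 * MvPolynomial.X 1 ^ 2 * MvPolynomial.X 3) +
    (MvPolynomial.C 136668 * MvPolynomial.X 0 * MvPolynomial.X 1 ^ 3 * MvPolynomial.X 3) +
    (MvPolynomial.C 19008 * MvPolynomial.X 1 ^ 4 * MvPolynomial.X 3) +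
    (MvPolynomial.C 177646 * MvPolynomial.X 0 ^ 3 * MvPolynomial.X 2 * MvPolynomial.X 3) +
    (MvPolynomial.C 653482 * MvPolynomial.X 0 ^ 2 * MvPolynomial.X 1 * MvPolynomial.X 2 * MvPolynomial.X 3) +
    (MvPolynomial.C 644798 * MvPolynomial.X 0 * MvPolynomial.X 1 ^ 2 * MvPolynomial.X 2 * MvPolynomial.X 3) +
    (MvPolynomial.C 170010 * MvPolynomial.X 1 ^ 3 * MvPolynomial.X 2 * MvPolynomial.X 3) +
    (MvPolynomial.C 335962 * MvPolynomial.X 0 ^ 2 * MvPolynomial.X 2 ^ 2 * MvPolynomial.X 3) +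
    (MvPolynomial.C 716864 * MvPolynomial.X 0 * MvPolynomial.X 1 * MvPolynomial.X 2 ^ 2 * MvPolynomial.X 3) +
    (MvPolynomial.C 339546 * MvPolynomial.X 1 ^ 2 * MvPolynomial.X 2 ^ 2 * MvPolynomial.X 3) +
    (MvPolynomial.C 197328 * MvPolynomial.X 0 * MvPolynomial.X 2 ^ 3 * MvPolynomial.X 3) +
    (MvPolynomial.C 198864 * MvPolynomial.X 1 * MvPolynomial.X 2 ^ 3 * MvPolynomial.X 3) +
    (MvPolynomial.C 23040 * MvPolynomial.X 2 ^ 4 * MvPolynomial.X 3) +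
    (MvPolynomial.C 89733 * MvPolynomial.X 0 ^ 3 * MvPolynomial.X 3 ^ 2) +
    (MvPolynomial.C 328001 * MvPolynomial.X 0 ^ 2 * MvPolynomial.X 1 * MvPolynomial.X 3 ^ 2) +
    (MvPolynomial.C 326473 * MvPolynomial.X 0 * MvPolynomial.X 1 ^ 2 * MvPolynomial.X 3 ^ 2) +
    (MvPolynomial.C 88173 * MvPolynomial.X 1 ^ 3 * MvPolynomial.X 3 ^ 2) +
    (MvPolynomial.C 347858 * MvPolynomial.X 0 ^ 2 * MvPolynomial.X 2 * MvPolynomial.X 3 ^ 2) +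
    (MvPolynomial.C 740512 * MvPolynomial.X 0 * MvPolynomial.X 1 * MvPolynomial.X 2 * MvPolynomial.X 3 ^ 2) +
    (MvPolynomial.C 353442 * MvPolynomial.X 1 ^ 2 * MvPolynomial.X 2 * MvPolynomial.X 3 ^ 2) +
    (MvPolynomial.C 335416 * MvPolynomial.X 0 * MvPolynomial.X 2 ^ 2 * MvPolynomial.X 3 ^ 2) +
    (MvPolynomial.C 339032 * MvPolynomial.X 1 * MvPolynomial.X 2 ^ 2 * MvPolynomial.X 3 ^ 2) +
    (MvPolynomial.C 74736 * MvPolynomial.X 2 ^ 3 * MvPolynomial.X 3 ^ 2) +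
    (MvPolynomial.C 105780 * MvPolynomial.X 0 ^ 2 * MvPolynomial.X 3 ^ 3) +
    (MvPolynomial.C 222664 * MvPolynomial.X 0 * MvPolynomial.X 1 * MvPolynomial.X 3 ^ 3) +
    (MvPolynomial.C 109284 * MvPolynomial.X 1 ^ 2 * MvPolynomial.X 3 ^ 3) +
    (MvPolynomial.C 206192 * MvPolynomial.X 0 * MvPolynomial.X 2 * MvPolynomial.X 3 ^ 3) +
    (MvPolynomial.C 208528 * MvPolynomial.X 1 * MvPolynomial.X 2 * MvPolynomial.X 3 ^ 3) +
    (MvPolynomial.C 77088 * MvPolynomial.X 2 ^ 2 * MvPolynomial.X 3 ^ 3) +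
    (MvPolynomial.C 37320 * MvPolynomial.X 0 * MvPolynomial.X 3 ^ 4) +
    (MvPolynomial.C 37320 * MvPolynomial.X 1 * MvPolynomial.X 3 ^ 4) +
    (MvPolynomial.C 24880 * MvPolynomial.X 2 * MvPolynomial.X 3 ^ 4)

def matA1 : Matrix (Fin 9) (Fin 9) ℝ :=
  !![0, 0, 0, 0, 0, 0, 0, 0, 0;
     0, 2, 4, 4, 2, 3, 0, 3, 0;
     0, 4, 15, 10, 4, 9, 0, 12, 0;
     0, 4, 10, 15, 4, 12, 0, 7, 0;
     0, 2, 4, 4, 8, 4, 0, 4, 0;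
     0, 3, 9, 12, 4, 12, 0, 8, 0;
     0, 0, 0, 0, 0, 0, 0, 0, 0;
     0, 3, 12, 7, 4, 8, 0, 12, 0;
     0, 0, 0, 0, 0, 0, 0, 0, 0]

def matA2 : Matrix (Fin 9) (Fin 9) ℝ :=
  !![2, 0, 4, 4, 0, 0, 3, 0, 3;
     0, 0, 0, 0, 0, 0, 0, 0, 0;
     4, 0, 15, 12, 4, 0, 9, 0, 12;
     4, 0, 12, 15, 4, 0, 12, 0, 9;
     0, 0, 4, 4, 8, 0, 4, 0, 4;
     0, 0, 0, 0, 0, 0, 0, 0, 0;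
     3, 0, 9, 12, 4, 0, 12, 0, 8;
     0, 0, 0, 0, 0, 0, 0, 0, 0;
     3, 0, 12, 9, 4, 0, 8, 0, 12]

def matA3 : Matrix (Fin 9) (Fin 9) ℝ :=
  !![5, 4, 5, 13, 0, 3, 4, 0, 0;
     4, 5, 5, 13, 0, 4, 3, 0, 0;
     5, 5, 8, 16, 0, 4, 4, 0, 0;
     13, 13, 16, 66, 0, 24, 24, 0, 0;
     0, 0, 0, 0, 0, 0, 0, 0, 0;
     3, 4, 4, 24, 0, 12, 8, 0, 0;
     4, 3, 4, 24, 0, 8, 12, 0, 0;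
     0, 0, 0, 0, 0, 0, 0, 0, 0;
     0, 0, 0, 0, 0, 0, 0, 0, 0]

def matA4 : Matrix (Fin 9) (Fin 9) ℝ :=
  !![5, 4, 13, 5, 0, 0, 0, 5, 4;
     4, 5, 11, 5, 0, 0, 0, 4, 3;
     13, 11, 62, 14, 0, 0, 0, 24, 24;
     5, 5, 14, 8, 0, 0, 0, 4, 4;
     0, 0, 0, 0, 0, 0, 0, 0, 0;
     0, 0, 0, 0, 0, 0, 0, 0, 0;
     0, 0, 0, 0, 0, 0, 0, 0, 0;
     5, 4, 24, 4, 0, 0, 0, 12, 8;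
     4, 3, 24, 4, 0, 0, 0, 8, 12]

/-! ### Integer polynomials in nested Horner form -/

namespace Horner

/-- Coefficientwise sum of two polynomials in one variable, given by their lists of coefficients in
increasing degree; `f` adds coefficients. This and the next three definitions use the bare recursor
`List.rec`, which the kernel reduces without first unfolding a compiled recursion. -/
noncomputable def add {α : Type} (f : α → α → α) (p : List α) : List α → List α :=
  List.rec (motive := fun _ => List α → List α) (fun q => q)
    (fun a p ih q => List.rec (a :: p) (fun b q _ => f a b :: ih q) q) p

/-- Apply `f` to every coefficient. -/
noncomputable def map {α : Type} (f : α → α) (p : List α) : List α :=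
  List.rec [] (fun a _ ih => f a :: ih) p

/-- Multiplication by the variable: prepend the zero coefficient `z`. The zero polynomial `[]` is left
alone, so that no spurious coefficients appear. -/
noncomputable def shift {α : Type} (z : α) (p : List α) : List α :=
  List.rec [] (fun a p _ => z :: a :: p) p

/-- All coefficients pass the zero test `f`. -/
noncomputable def allZero {α : Type} (f : α → Bool) (p : List α) : Bool :=
  List.rec true (fun a _ ih => and (f a) ih) p

/-- Equal to `k n`, but a case distinction on `n` makes the kernel reduce `n` to a literal before it is
substituted into `k`. Kernel reduction is otherwise lazy and would copy the unevaluated expression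
for `n` to every place where `k` uses it. -/
noncomputable def forceNat {β : Type} (n : ℕ) (k : ℕ → β) : β :=
  Nat.rec (k 0) (fun n _ => k (n + 1)) n

/-- Equal to `k z`, with `z` reduced to a literal first. -/
noncomputable def forceInt {β : Type} (z : ℤ) (k : ℤ → β) : β :=
  Int.rec (fun n => forceNat n fun n => k (.ofNat n))
    (fun n => forceNat n fun n => k (.negSucc n)) z

/-- Equal to the continuation applied to `p`, with every coefficient reduced first by `f`. -/
noncomputable def force {α β : Type} (f : α → (α → β) → β) (p : List α) : (List α → β) → β :=
  List.rec (motive := fun _ => (List α → β) → β) (fun k => k [])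
    (fun a _ ih k => f a fun a => ih fun p => k (a :: p)) p

end Horner

/-- A polynomial in `y, z, w` with integer coefficients, as a polynomial in `w` (outermost list) whose
coefficients are polynomials in `z`, whose coefficients are polynomials in `y`. -/
abbrev Coeff : Type := List (List (List ℤ))

/-- The affine linear form `a + b y + c z + d w`, an entry of the dehomogenised matrix pencil. -/
structure LinForm where
  a : ℤ
  b : ℤ
  c : ℤ
  d : ℤ

def LinForm.neg (l : LinForm) : LinForm := ⟨-l.a, -l.b, -l.c, -l.d⟩

namespace Coeff

noncomputable def add : Coeff → Coeff → Coeff := Horner.add (Horner.add (Horner.add Int.add))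

noncomputable def smul (a : ℤ) : Coeff → Coeff := Horner.map (Horner.map (Horner.map (Int.mul a)))

noncomputable def mulY : Coeff → Coeff := Horner.map (Horner.map (Horner.shift 0))

noncomputable def mulZ : Coeff → Coeff := Horner.map (Horner.shift [])

noncomputable def mulW : Coeff → Coeff := Horner.shift []

/-- Zero test on the constructors of `ℤ`, cheaper for the kernel than `decide (n = 0)`. -/
def intZero : ℤ → Bool
  | .ofNat n => Nat.beq n 0
  | .negSucc _ => false

noncomputable def isZero : Coeff → Bool := Horner.allZero (Horner.allZero (Horner.allZero intZero))

noncomputable def force {β : Type} : Coeff → (Coeff → β) → β :=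
  Horner.force (Horner.force (Horner.force Horner.forceInt))

/-- `a p + q`, skipping the work when `a = 0`. -/
noncomputable def addSmul (a : ℤ) (p q : Coeff) : Coeff :=
  bif intZero a then q else add (smul a p) q

/-- The product of a linear form and a polynomial. -/
noncomputable def mulLin (l : LinForm) (p : Coeff) : Coeff :=
  addSmul l.a p (addSmul l.b (mulY p) (addSmul l.c (mulZ p) (addSmul l.d (mulW p) [])))

end Coeff

/-! ### Laplace expansion with tabulated minors -/

/-- A table of polynomials indexed by sets of columns. A set of columns is a `List Bool`, the
characteristic function of the set, and the tree branches on its successive bits. -/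
inductive MinorTree : Type
  | leaf : Coeff → MinorTree
  | node : MinorTree → MinorTree → MinorTree

namespace MinorTree

/-- The table of `f` on the subsets of cardinality `k` of an `n`-element set of columns. A branch ends
as soon as no further column is to be chosen. -/
def tab : ℕ → ℕ → (List Bool → Coeff) → MinorTree
  | 0, _, f => leaf (f [])
  | n + 1, 0, f => leaf (f (List.replicate (n + 1) false))
  | n + 1, k + 1, f => node (tab n (k + 1) fun m => f (false :: m)) (tab n k fun m => f (true :: m))

/-- Look up a set of columns. -/
def find : MinorTree → List Bool → Coeff
  | leaf p, _ => p
  | node l _, [] => find l []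
  | node l _, false :: m => find l m
  | node _ r, true :: m => find r m

/-- Equal to `k` applied to the table, with all its entries evaluated first. -/
noncomputable def force {β : Type} : MinorTree → (MinorTree → β) → β
  | leaf p, k => Coeff.force p fun p => k (leaf p)
  | node l r, k => force l fun l => force r fun r => k (node l r)

end MinorTree

/-- Laplace expansion along the row `r`, over the columns in the given set: the alternating sum of the
entries of `r` in these columns times `f` of the set with that column removed. The row `s` is meant
to be `-r`; the two rows trade places after each chosen column, which produces the signs. -/
noncomputable def expandRow (f : List Bool → Coeff) : List Bool → List LinForm → List LinForm → Coeff
  | true :: m, l :: r, _ :: s =>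
    Coeff.add (Coeff.mulLin l (f (false :: m))) (expandRow (fun m => f (true :: m)) m s r)
  | false :: m, _ :: r, _ :: s => expandRow (fun m => f (false :: m)) m r s
  | _, _, _ => []

/-- Apply the continuation to the table of all maximal minors of a list of rows with nine columns.
The table for `r :: rs` comes from that for `rs` by expansion along `r`, and is evaluated before use. -/
noncomputable def withMinors {β : Type} : List (List LinForm) → (MinorTree → β) → β
  | [], k => k (.leaf [[[1]]])
  | r :: rs, k => withMinors rs fun t =>
    (MinorTree.tab 9 (rs.length + 1) fun m => expandRow t.find m r (r.map .neg)).force k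

/-! ### The certificate -/

/-- The rows of the matrix `A₁ + y A₂ + z A₃ + w A₄`. -/
def pencil : List (List LinForm) :=
  [[⟨0, 2, 5, 5⟩, ⟨0, 0, 4, 4⟩, ⟨0, 4, 5, 13⟩, ⟨0, 4, 13, 5⟩, ⟨0, 0, 0, 0⟩, ⟨0, 0, 3, 0⟩, ⟨0, 3, 4, 0⟩, ⟨0, 0, 0, 5⟩, ⟨0, 3, 0, 4⟩],
   [⟨0, 0, 4, 4⟩, ⟨2, 0, 5, 5⟩, ⟨4, 0, 5, 11⟩, ⟨4, 0, 13, 5⟩, ⟨2, 0, 0, 0⟩, ⟨3, 0, 4, 0⟩, ⟨0, 0, 3, 0⟩, ⟨3, 0, 0, 4⟩, ⟨0, 0, 0, 3⟩],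
   [⟨0, 4, 5, 13⟩, ⟨4, 0, 5, 11⟩, ⟨15, 15, 8, 62⟩, ⟨10, 12, 16, 14⟩, ⟨4, 4, 0, 0⟩, ⟨9, 0, 4, 0⟩, ⟨0, 9, 4, 0⟩, ⟨12, 0, 0, 24⟩, ⟨0, 12, 0, 24⟩],
   [⟨0, 4, 13, 5⟩, ⟨4, 0, 13, 5⟩, ⟨10, 12, 16, 14⟩, ⟨15, 15, 66, 8⟩, ⟨4, 4, 0, 0⟩, ⟨12, 0, 24, 0⟩, ⟨0, 12, 24, 0⟩, ⟨7, 0, 0, 4⟩, ⟨0, 9, 0, 4⟩],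
   [⟨0, 0, 0, 0⟩, ⟨2, 0, 0, 0⟩, ⟨4, 4, 0, 0⟩, ⟨4, 4, 0, 0⟩, ⟨8, 8, 0, 0⟩, ⟨4, 0, 0, 0⟩, ⟨0, 4, 0, 0⟩, ⟨4, 0, 0, 0⟩, ⟨0, 4, 0, 0⟩],
   [⟨0, 0, 3, 0⟩, ⟨3, 0, 4, 0⟩, ⟨9, 0, 4, 0⟩, ⟨12, 0, 24, 0⟩, ⟨4, 0, 0, 0⟩, ⟨12, 0, 12, 0⟩, ⟨0, 0, 8, 0⟩, ⟨8, 0, 0, 0⟩, ⟨0, 0, 0, 0⟩],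
   [⟨0, 3, 4, 0⟩, ⟨0, 0, 3, 0⟩, ⟨0, 9, 4, 0⟩, ⟨0, 12, 24, 0⟩, ⟨0, 4, 0, 0⟩, ⟨0, 0, 8, 0⟩, ⟨0, 12, 12, 0⟩, ⟨0, 0, 0, 0⟩, ⟨0, 8, 0, 0⟩],
   [⟨0, 0, 0, 5⟩, ⟨3, 0, 0, 4⟩, ⟨12, 0, 0, 24⟩, ⟨7, 0, 0, 4⟩, ⟨4, 0, 0, 0⟩, ⟨8, 0, 0, 0⟩, ⟨0, 0, 0, 0⟩, ⟨12, 0, 0, 12⟩, ⟨0, 0, 0, 8⟩],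
   [⟨0, 3, 0, 4⟩, ⟨0, 0, 0, 3⟩, ⟨0, 12, 0, 24⟩, ⟨0, 9, 0, 4⟩, ⟨0, 4, 0, 0⟩, ⟨0, 0, 0, 0⟩, ⟨0, 8, 0, 0⟩, ⟨0, 0, 0, 8⟩, ⟨0, 12, 0, 12⟩]]

/-- The polynomial `q(1, y, z, w)`. -/
def qCoeff : Coeff :=
  [[[0, 13684, 44736, 43092, 12672], [20526, 137404, 234086, 130140, 19008], [81141, 298281, 294753, 78381], [95004, 202680, 97308], [34560, 34560]],
   [[20526, 143132, 245302, 136668, 19008], [177646, 653482, 644798, 170010], [335962, 716864, 339546], [197328, 198864], [23040]],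
   [[89733, 328001, 326473, 88173], [347858, 740512, 353442], [335416, 339032], [74736]],
   [[105780, 222664, 109284], [206192, 208528], [77088]],
   [[37320, 37320], [24880]]]

/-- The polynomial `8 q(1, y, z, w) h₄(1, y, z, w)`, following the shape of `h₄`. -/
noncomputable def rhsCoeff : Coeff :=
  Coeff.add (Coeff.mulY (Coeff.mulY (Coeff.smul 8 qCoeff)))
    (Coeff.mulLin ⟨4, 4, 4, 4⟩
      (Coeff.add (Coeff.mulY (Coeff.mulLin ⟨0, 0, 8, 8⟩ qCoeff))
        (Coeff.mulZ (Coeff.mulW (Coeff.mulLin ⟨8, 8, 0, 0⟩ qCoeff)))))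

/-- The identity at `x₁ = 1`, as an identity of lists of integers: the determinant computed by Laplace
expansion minus the right-hand side has only zero coefficients. -/
theorem pencil_check : withMinors pencil (fun t =>
    Coeff.isZero (Coeff.add (t.find (List.replicate 9 true)) (Coeff.smul (-1) rhsCoeff))) = true := by
  decide +kernel


/-! ### Evaluation of polynomials in a commutative ring -/

section Semantics

variable {R : Type*} [CommRing R]

namespace Horner

/-- The value at `x` of a list of coefficients, each of which is evaluated by `ev`. -/
def eval {α : Type} (ev : α → R) (x : R) : List α → R
  | [] => 0
  | a :: p => ev a + x * eval ev x p

theorem eval_add {α : Type} {ev : α → R} {f : α → α → α} (h : ∀ a b, ev (f a b) = ev a + ev b)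
    (x : R) (p q : List α) : eval ev x (add f p q) = eval ev x p + eval ev x q := by
  induction p generalizing q with
  | nil => simp [add, eval]
  | cons a p ih =>
    cases q with
    | nil => simp [add, eval]
    | cons b q =>
      change ev (f a b) + x * eval ev x (add f p q) = _
      rw [ih, h]
      simp only [eval]
      ring

theorem eval_map {α : Type} {ev : α → R} {f : α → α} {c : R} (h : ∀ a, ev (f a) = c * ev a)
    (x : R) (p : List α) : eval ev x (map f p) = c * eval ev x p := by
  induction p with
  | nil => simp [map, eval]
  | cons a p ih =>
    change ev (f a) + x * eval ev x (map f p) = _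
    rw [ih, h]
    simp only [eval]
    ring

theorem eval_shift {α : Type} {ev : α → R} {z : α} (h : ev z = 0) (x : R) (p : List α) :
    eval ev x (shift z p) = x * eval ev x p := by
  cases p <;> simp [shift, eval, h]

theorem eval_of_allZero {α : Type} {ev : α → R} {f : α → Bool} (h : ∀ a, f a = true → ev a = 0)
    (x : R) (p : List α) (hp : allZero f p = true) : eval ev x p = 0 := by
  induction p with
  | nil => rfl
  | cons a p ih =>
    obtain ⟨h1, h2⟩ := (Bool.and_eq_true_iff (x := f a) (y := allZero f p)).mp hp
    simp [eval, h a h1, ih h2]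

theorem forceNat_eq {β : Type} (n : ℕ) (k : ℕ → β) : forceNat n k = k n := by
  cases n <;> rfl

theorem forceInt_eq {β : Type} (z : ℤ) (k : ℤ → β) : forceInt z k = k z := by
  cases z with
  | ofNat n => exact forceNat_eq n fun n => k (.ofNat n)
  | negSucc n => exact forceNat_eq n fun n => k (.negSucc n)

theorem force_eq {α β : Type} {f : α → (α → β) → β} (h : ∀ a k, f a k = k a) (p : List α)
    (k : List α → β) : force f p k = k p := by
  induction p generalizing k with
  | nil => rfl
  | cons a p ih =>
    change f a (fun a => force f p fun p => k (a :: p)) = _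
    rw [h, ih]

end Horner

/-- The value of a linear form. -/
def LinForm.eval (y z w : R) (l : LinForm) : R := l.a + l.b * y + l.c * z + l.d * w

theorem LinForm.eval_neg (y z w : R) (l : LinForm) : l.neg.eval y z w = -l.eval y z w := by
  simp only [LinForm.eval, LinForm.neg]
  push_cast
  ring

namespace Coeff

/-- The value of a polynomial at `(y, z, w)`. -/
def eval (y z w : R) : Coeff → R :=
  Horner.eval (Horner.eval (Horner.eval (fun n : ℤ => (n : R)) y) z) w

variable (y z w : R)

theorem eval_nil : eval y z w [] = 0 := rfl

theorem eval_add (p q : Coeff) : eval y z w (add p q) = eval y z w p + eval y z w q :=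
  Horner.eval_add (Horner.eval_add (Horner.eval_add Int.cast_add _) _) _ p q

theorem eval_smul (a : ℤ) (p : Coeff) : eval y z w (smul a p) = a * eval y z w p :=
  Horner.eval_map (Horner.eval_map (Horner.eval_map (Int.cast_mul a) _) _) _ p

theorem eval_mulY (p : Coeff) : eval y z w (mulY p) = y * eval y z w p :=
  Horner.eval_map (Horner.eval_map (Horner.eval_shift Int.cast_zero _) _) _ p

theorem eval_mulZ (p : Coeff) : eval y z w (mulZ p) = z * eval y z w p :=
  Horner.eval_map (Horner.eval_shift (z := ([] : List ℤ)) rfl _) _ p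

theorem eval_mulW (p : Coeff) : eval y z w (mulW p) = w * eval y z w p :=
  Horner.eval_shift (z := ([] : List (List ℤ))) rfl _ p

theorem eq_zero_of_intZero : ∀ n : ℤ, intZero n = true → n = 0
  | .ofNat n, h => by
    have : n = 0 := Nat.eq_of_beq_eq_true h
    simp [this]
  | .negSucc _, h => by simp [intZero] at h

theorem eval_of_isZero (p : Coeff) (h : isZero p = true) : eval y z w p = 0 :=
  Horner.eval_of_allZero (Horner.eval_of_allZero (Horner.eval_of_allZero
    (fun n hn => by simp [eq_zero_of_intZero n hn]) _) _) _ p h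

theorem force_eq {β : Type} (p : Coeff) (k : Coeff → β) : force p k = k p :=
  Horner.force_eq (Horner.force_eq (Horner.force_eq Horner.forceInt_eq)) p k

theorem eval_addSmul (a : ℤ) (p q : Coeff) :
    eval y z w (addSmul a p q) = a * eval y z w p + eval y z w q := by
  cases h : intZero a with
  | true =>
    simp only [addSmul, h, cond_true]
    simp [eq_zero_of_intZero a h]
  | false => simp [addSmul, h, eval_add, eval_smul]

theorem eval_mulLin (l : LinForm) (p : Coeff) :
    eval y z w (mulLin l p) = l.eval y z w * eval y z w p := by
  simp only [mulLin, eval_addSmul, eval_mulY, eval_mulZ, eval_mulW, eval_nil, LinForm.eval]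
  ring

end Coeff

namespace MinorTree

/-- The table returns the tabulated function on sets of the prescribed cardinality. -/
theorem find_tab (n k : ℕ) (f : List Bool → Coeff) (m : List Bool) (hn : m.length = n)
    (hk : m.count true = k) : (tab n k f).find m = f m := by
  induction m generalizing n k f with
  | nil => subst hn; rfl
  | cons b m ih =>
    subst hn
    cases k with
    | zero =>
      have : b :: m = List.replicate (m.length + 1) false := by
        refine List.eq_replicate_iff.mpr ⟨rfl, fun x hx => ?_⟩
        cases x with
        | false => rfl
        | true => exact absurd hx (List.count_eq_zero.mp hk)
      change f (List.replicate (m.length + 1) false) = _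
      rw [this]
    | succ k =>
      cases b with
      | false => exact ih _ _ _ rfl (by simpa using hk)
      | true => exact ih _ _ _ rfl (by simpa using hk)

theorem force_eq {β : Type} (t : MinorTree) (k : MinorTree → β) : t.force k = k t := by
  induction t generalizing k with
  | leaf p => exact Coeff.force_eq p _
  | node l r hl hr => simp only [force, hl, hr]

end MinorTree

/-! ### Correctness of the Laplace expansion -/

/-- The position of the `j`-th column (counted from zero) of a set of columns, in increasing order;
irrelevant when the set has at most `j` elements. -/
def trueCol : List Bool → ℕ → ℕ
  | [], _ => 0
  | false :: m, j => trueCol m j + 1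
  | true :: _, 0 => 0
  | true :: m, j + 1 => trueCol m j + 1

/-- The set of columns without its `j`-th element. -/
def del : List Bool → ℕ → List Bool
  | [], _ => []
  | false :: m, j => false :: del m j
  | true :: m, 0 => false :: m
  | true :: m, j + 1 => true :: del m j

theorem length_del (m : List Bool) (j : ℕ) : (del m j).length = m.length := by
  induction m generalizing j with
  | nil => rfl
  | cons b m ih => cases b <;> cases j <;> simp [del, ih]

theorem count_del (m : List Bool) (j : ℕ) (hj : j < m.count true) :
    (del m j).count true + 1 = m.count true := by
  induction m generalizing j with
  | nil => simp at hj
  | cons b m ih =>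
    cases b with
    | false => simpa [del] using ih j (by simpa using hj)
    | true =>
      cases j with
      | zero => simp [del]
      | succ j => simpa [del] using ih j (by simpa using hj)

/-- Enumerating the set with its `j`-th element removed skips `j`, as `Fin.succAbove` does. -/
theorem trueCol_del (m : List Bool) (j i : ℕ) (hi : i + 1 < m.count true) (hj : j < m.count true) :
    trueCol (del m j) i = trueCol m (if i < j then i else i + 1) := by
  induction m generalizing i j with
  | nil => simp at hj
  | cons b m ih =>
    cases b with
    | false =>
      simpa [del, trueCol] using ih j i (by simpa using hi) (by simpa using hj)
    | true =>
      cases j with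
      | zero => simp [del, trueCol]
      | succ j =>
        cases i with
        | zero => simp [del, trueCol]
        | succ i =>
          have := ih j i (by simpa using hi) (by simpa using hj)
          simp only [del, trueCol, this, Nat.add_lt_add_iff_right]
          split <;> rfl

theorem trueCol_replicate (n j : ℕ) (hj : j < n) : trueCol (List.replicate n true) j = j := by
  induction n generalizing j with
  | zero => omega
  | succ n ih =>
    cases j with
    | zero => rfl
    | succ j => simp [List.replicate_succ, trueCol, ih j (by omega)]

/-- The value of the `j`-th entry of a row, zero beyond its end. -/
def entry (y z w : R) (r : List LinForm) (j : ℕ) : R := (r.getD j ⟨0, 0, 0, 0⟩).eval y z w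

theorem entry_nil (y z w : R) (j : ℕ) : entry y z w [] j = 0 := by
  simp [entry, LinForm.eval]

theorem entry_neg (y z w : R) (r : List LinForm) (j : ℕ) :
    entry y z w (r.map .neg) j = -entry y z w r j := by
  induction r generalizing j with
  | nil => simp [entry_nil]
  | cons l r ih =>
    cases j with
    | zero => exact LinForm.eval_neg y z w l
    | succ j => exact ih j

theorem eval_expandRow (y z w : R) (f : List Bool → Coeff) (m : List Bool) (r s : List LinForm)
    (hl : r.length = s.length) (hs : ∀ j, entry y z w s j = -entry y z w r j) :
    (expandRow f m r s).eval y z w = ∑ j ∈ Finset.range (m.count true),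
      (-1) ^ j * entry y z w r (trueCol m j) * (f (del m j)).eval y z w := by
  induction m generalizing f r s with
  | nil => simp [expandRow, Coeff.eval_nil]
  | cons b m ih =>
    match r, s, hl with
    | [], [], _ => simp [expandRow, Coeff.eval_nil, entry_nil]
    | l :: r, l' :: s, hl =>
      have hl' : r.length = s.length := by simpa using hl
      have hs' : ∀ j, entry y z w s j = -entry y z w r j := fun j => hs (j + 1)
      cases b with
      | false =>
        have := ih (fun m => f (false :: m)) r s hl' hs'
        have e : ∀ j, entry y z w (l :: r) (j + 1) = entry y z w r j := fun _ => rfl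
        simpa [expandRow, del, trueCol, e] using this
      | true =>
        have := ih (fun m => f (true :: m)) s r hl'.symm (fun j => by rw [hs', neg_neg])
        simp only [expandRow, Coeff.eval_add, Coeff.eval_mulLin, this, List.count_cons_self,
          Finset.sum_range_succ', trueCol, del]
        rw [add_comm]
        congr 1
        · refine Finset.sum_congr rfl fun j _ => ?_
          have : entry y z w (l :: r) (trueCol m j + 1) = entry y z w r (trueCol m j) := rfl
          rw [this, hs', pow_succ]
          ring
        · simp [entry]

/-- The table of all maximal minors; `withMinors` without the evaluation order. -/
noncomputable def minors : List (List LinForm) → MinorTree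
  | [] => .leaf [[[1]]]
  | r :: rs => .tab 9 (rs.length + 1) fun m => expandRow (minors rs).find m r (r.map .neg)

theorem withMinors_eq {β : Type} (rs : List (List LinForm)) (k : MinorTree → β) :
    withMinors rs k = k (minors rs) := by
  induction rs generalizing k with
  | nil => rfl
  | cons r rs ih => rw [withMinors, ih, MinorTree.force_eq, minors]

/-- The entry of the table at a set of columns is the determinant of the square matrix formed by the
rows and these columns. -/
theorem eval_minors (y z w : R) (rs : List (List LinForm)) (m : List Bool) (hm : m.length = 9)
    (hc : m.count true = rs.length) :
    ((minors rs).find m).eval y z w =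
      (Matrix.of fun i j : Fin rs.length => entry y z w rs[i] (trueCol m j)).det := by
  induction rs generalizing m with
  | nil => simp [minors, MinorTree.find, Coeff.eval, Horner.eval]
  | cons r rs ih =>
    have hc' : m.count true = rs.length + 1 := by simpa using hc
    rw [minors, MinorTree.find_tab _ _ _ m hm hc',
      eval_expandRow y z w _ m r _ (by simp) (entry_neg y z w r), hc]
    change _ = (Matrix.of fun i j : Fin (rs.length + 1) =>
      entry y z w (r :: rs)[i] (trueCol m j)).det
    rw [Matrix.det_succ_row_zero, Finset.sum_range]
    refine Finset.sum_congr rfl fun j _ => ?_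
    have hj : (j : ℕ) < m.count true := by rw [hc]; exact j.2
    have hcount := count_del m j hj
    rw [ih (del m j) (by rw [length_del, hm]) (by simp at hc; omega)]
    congr 2
    ext i k
    have hk : (k : ℕ) + 1 < m.count true := by
      rw [hc, List.length_cons]; exact Nat.succ_lt_succ k.2
    simp only [Matrix.of_apply, Matrix.submatrix_apply, trueCol_del m j k hk hj]
    congr 2
    by_cases h : (k : ℕ) < j
    · rw [if_pos h, Fin.succAbove_of_castSucc_lt _ _ h]; rfl
    · rw [if_neg h, Fin.succAbove_of_le_castSucc _ _ (not_lt.mp h)]; rfl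

theorem eval_minors_full (y z w : R) (rs : List (List LinForm)) (hrs : rs.length = 9) :
    ((minors rs).find (List.replicate 9 true)).eval y z w =
      (Matrix.of fun i j : Fin 9 => entry y z w (rs.getD i []) j).det := by
  -- A variable size `n` allows substituting it by `rs.length`, which is not a variable.
  obtain ⟨n, hn⟩ : ∃ n, n = 9 := ⟨9, rfl⟩
  have key : ∀ m : List Bool, m.length = 9 → m.count true = rs.length →
      ((minors rs).find m).eval y z w =
        (Matrix.of fun i j : Fin n => entry y z w (rs.getD i []) (trueCol m j)).det := by
    intro m hm hc
    obtain rfl : rs.length = n := hrs.trans hn.symm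
    rw [eval_minors y z w rs m hm hc]
    congr 1
    ext i j
    simp
  rw [key _ (by simp) (by simp [hrs])]
  subst hn
  congr 1
  ext i j
  simp only [Matrix.of_apply, trueCol_replicate 9 j j.2]

end Semantics

/-! ### The determinant identity -/

theorem pencil_entry (y z w : ℝ) (i j : Fin 9) :
    entry y z w (pencil.getD i []) j = (matA1 + y • matA2 + z • matA3 + w • matA4) i j := by
  have ha : matA1 i j = (((pencil.getD i []).getD j ⟨0, 0, 0, 0⟩).a : ℝ) := by
    fin_cases i <;> fin_cases j <;>
      first | exact (Int.cast_zero (R := ℝ)).symm | exact (Int.cast_ofNat (R := ℝ) _).symm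
  have hb : matA2 i j = (((pencil.getD i []).getD j ⟨0, 0, 0, 0⟩).b : ℝ) := by
    fin_cases i <;> fin_cases j <;>
      first | exact (Int.cast_zero (R := ℝ)).symm | exact (Int.cast_ofNat (R := ℝ) _).symm
  have hc : matA3 i j = (((pencil.getD i []).getD j ⟨0, 0, 0, 0⟩).c : ℝ) := by
    fin_cases i <;> fin_cases j <;>
      first | exact (Int.cast_zero (R := ℝ)).symm | exact (Int.cast_ofNat (R := ℝ) _).symm
  have hd : matA4 i j = (((pencil.getD i []).getD j ⟨0, 0, 0, 0⟩).d : ℝ) := by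
    fin_cases i <;> fin_cases j <;>
      first | exact (Int.cast_zero (R := ℝ)).symm | exact (Int.cast_ofNat (R := ℝ) _).symm
  simp only [Matrix.add_apply, Matrix.smul_apply, smul_eq_mul, ha, hb, hc, hd, entry, LinForm.eval]
  ring

theorem eval_qCoeff (y z w : ℝ) :
    qCoeff.eval y z w = MvPolynomial.eval ![1, y, z, w] qpoly := by
  simp [qCoeff, Coeff.eval, Horner.eval, qpoly]
  ring

theorem eval_rhsCoeff (y z w : ℝ) :
    rhsCoeff.eval y z w =
      8 * MvPolynomial.eval ![1, y, z, w] qpoly * MvPolynomial.eval ![1, y, z, w] h4 := by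
  simp only [rhsCoeff, Coeff.eval_add, Coeff.eval_smul, Coeff.eval_mulY, Coeff.eval_mulZ,
    Coeff.eval_mulW, Coeff.eval_mulLin, LinForm.eval, eval_qCoeff]
  simp [h4]
  ring

/-- The identity at `x₁ = 1`. -/
theorem det_pencil (y z w : ℝ) :
    (matA1 + y • matA2 + z • matA3 + w • matA4).det =
      8 * MvPolynomial.eval ![1, y, z, w] qpoly * MvPolynomial.eval ![1, y, z, w] h4 := by
  have h := pencil_check
  rw [withMinors_eq] at h
  have h0 := Coeff.eval_of_isZero y z w _ h
  rw [Coeff.eval_add, Coeff.eval_smul, eval_minors_full y z w pencil rfl, eval_rhsCoeff] at h0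
  have hdet : (Matrix.of fun i j : Fin 9 => entry y z w (pencil.getD i []) j) =
      matA1 + y • matA2 + z • matA3 + w • matA4 := by
    ext i j
    exact pencil_entry y z w i j
  rw [hdet] at h0
  push_cast at h0
  linarith


theorem eval_qpoly_scale (a y z w : ℝ) :
    MvPolynomial.eval ![a, a * y, a * z, a * w] qpoly =
      a ^ 5 * MvPolynomial.eval ![1, y, z, w] qpoly := by
  simp [qpoly]
  ring

theorem eval_h4_scale (a y z w : ℝ) :
    MvPolynomial.eval ![a, a * y, a * z, a * w] h4 =
      a ^ 4 * MvPolynomial.eval ![1, y, z, w] h4 := by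
  simp [h4]
  ring

theorem stmt10 :
    (Matrix.of fun j k : Fin 9 =>
        MvPolynomial.C (matA1 j k) * X 0 + MvPolynomial.C (matA2 j k) * X 1 +
        MvPolynomial.C (matA3 j k) * X 2 + MvPolynomial.C (matA4 j k) * X 3).det
      = MvPolynomial.C 8 * qpoly * h4 := by
  -- Multiplying by the first variable allows evaluating only at points where it does not vanish,
  -- where homogeneity reduces the claim to the dehomogenised identity.
  refine mul_left_cancel₀ (MvPolynomial.X_ne_zero (R := ℝ) (0 : Fin 4)) ?_
  refine MvPolynomial.funext fun x => ?_
  simp only [map_mul, MvPolynomial.eval_X, MvPolynomial.eval_C]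
  rcases eq_or_ne (x 0) 0 with h0 | h0
  · simp [h0]
  congr 1
  obtain ⟨y, hy⟩ : ∃ y, x 1 = x 0 * y := ⟨x 1 / x 0, by field_simp⟩
  obtain ⟨z, hz⟩ : ∃ z, x 2 = x 0 * z := ⟨x 2 / x 0, by field_simp⟩
  obtain ⟨w, hw⟩ : ∃ w, x 3 = x 0 * w := ⟨x 3 / x 0, by field_simp⟩
  have hx : x = ![x 0, x 0 * y, x 0 * z, x 0 * w] := by
    ext i
    fin_cases i <;> simp [hy, hz, hw]
  have hM : (MvPolynomial.eval x).mapMatrix (Matrix.of fun j k : Fin 9 =>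
        MvPolynomial.C (matA1 j k) * X 0 + MvPolynomial.C (matA2 j k) * X 1 +
        MvPolynomial.C (matA3 j k) * X 2 + MvPolynomial.C (matA4 j k) * X 3) =
      x 0 • (matA1 + y • matA2 + z • matA3 + w • matA4) := by
    ext j k
    simp [hy, hz, hw]
    ring
  rw [RingHom.map_det, hM, Matrix.det_smul, det_pencil, Fintype.card_fin]
  generalize x 0 = a at hx
  rw [hx, eval_qpoly_scale, eval_h4_scale]
  ring
end

section
/- The points (0,0,1,0), (0,0,0,1), (0,1,0,0), (1,-1,1,1), (1,1,1,-1), and (-1,1,1,1) all lie in the hyperbolicity cone of q at e = (1,1,0,0), where q is the explicit degree-5 polynomial from the paper. -/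
/-!
The restriction `t ↦ q (t e + v)` of `q` to the line through `v` in direction `e = (1, 1, 0, 0)` is
computed explicitly for each of the six points `v`. Every one of these univariate quintics has
nonnegative coefficients and leading coefficient `114184 = q e > 0`, so it is positive at every
`t > 0` and has no positive root.
-/

open MvPolynomial Polynomial Matrix

noncomputable def e4' : Fin 4 → ℝ := ![1, 1, 0, 0]

/-- Evaluating the univariate restriction at `t` is evaluating `h` at `v + t e`. -/
theorem eval_univPoly {n : ℕ} (h : MvPolynomial (Fin n) ℝ) (e v : Fin n → ℝ) (t : ℝ) :
    (univPoly h e v).eval t = MvPolynomial.eval (fun i => v i + e i * t) h := by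
  induction h using MvPolynomial.induction_on with
  | C a => simp [univPoly]
  | add p q hp hq => simp_all [univPoly]
  | mul_X p i hp => simp_all [univPoly]

theorem mem_hypCone_of_pos {n : ℕ} {h : MvPolynomial (Fin n) ℝ} {e v : Fin n → ℝ}
    (H : ∀ t : ℝ, 0 < t → 0 < MvPolynomial.eval (fun i => v i + e i * t) h) :
    v ∈ hypCone h e := by
  intro t ht
  by_contra! hpos
  have h0 : (univPoly h e v).eval t = 0 := ht
  rw [eval_univPoly] at h0
  exact (H t hpos).ne' h0

theorem stmt14 :
    (![0, 0, 1, 0] : Fin 4 → ℝ) ∈ hypCone qpoly e4' ∧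
    (![0, 0, 0, 1] : Fin 4 → ℝ) ∈ hypCone qpoly e4' ∧
    (![0, 1, 0, 0] : Fin 4 → ℝ) ∈ hypCone qpoly e4' ∧
    (![1, -1, 1, 1] : Fin 4 → ℝ) ∈ hypCone qpoly e4' ∧
    (![1, 1, 1, -1] : Fin 4 → ℝ) ∈ hypCone qpoly e4' ∧
    (![-1, 1, 1, 1] : Fin 4 → ℝ) ∈ hypCone qpoly e4' := by
  refine ⟨?_, ?_, ?_, ?_, ?_, ?_⟩ <;>
  · refine mem_hypCone_of_pos fun t ht => ?_
    simp only [qpoly, e4', map_add, map_mul, map_pow, MvPolynomial.eval_C, MvPolynomial.eval_X,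
      Matrix.cons_val]
    -- Expanding in `t` exposes the nonnegative coefficients.
    ring_nf
    positivity
end
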